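/- Every valid layout that contains at least one item V but contains no pointer item is not deserializable. -/

import Mathlib

/-- A layout item: fixed-length field, variable-length field, or pointer `P o s`
with offset `o` and span `s`. -/
inductive Item : Type where
  | F : Item
  | V : Item
  | P : ℕ → ℕ → Item
deriving DecidableEq

/-- A layout is valid if every pointer `P o s` occurring in it satisfies
`o < |ℓ|` and `s ≤ |ℓ| - o`. -/
def ValidLayout (ℓ : List Item) : Prop :=
  ∀ o s : ℕ, Item.P o s ∈ ℓ → o < ℓ.length ∧ s ≤ ℓ.length - o

/-- Facts the parser can know about positions of the layout. -/
inductive ParseFact : Type where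
  | Beg : ℕ → ParseFact
  | Len : ℕ → ParseFact
  | Val : ℕ → ParseFact
deriving DecidableEq

/-- The smallest set of facts closed under the parser's inference rules. -/
inductive Derivable (ℓ : List Item) : ParseFact → Prop where
  | begin : Derivable ℓ (.Beg 0)
  | fieldF (i : ℕ) : ℓ[i]? = some .F → Derivable ℓ (.Len i)
  | fieldP (i o s : ℕ) : ℓ[i]? = some (.P o s) → Derivable ℓ (.Len i)
  | forwardVal (i : ℕ) : Derivable ℓ (.Beg i) → Derivable ℓ (.Len i) → Derivable ℓ (.Val i)
  | forwardBeg (i : ℕ) : Derivable ℓ (.Beg i) → Derivable ℓ (.Len i) → Derivable ℓ (.Beg (i+1))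
  | backwardBeg (i : ℕ) : Derivable ℓ (.Beg (i+1)) → Derivable ℓ (.Len i) → Derivable ℓ (.Beg i)
  | backwardVal (i : ℕ) : Derivable ℓ (.Beg (i+1)) → Derivable ℓ (.Len i) → Derivable ℓ (.Val i)
  | join (i : ℕ) : Derivable ℓ (.Beg i) → Derivable ℓ (.Beg (i+1)) → Derivable ℓ (.Len i)
  | jumpRight (i o s : ℕ) : ℓ[i]? = some (.P o s) → Derivable ℓ (.Val i) →
      Derivable ℓ (.Beg o) → Derivable ℓ (.Beg (o+s))
  | jumpLeft (i o s : ℕ) : ℓ[i]? = some (.P o s) → Derivable ℓ (.Val i) →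
      Derivable ℓ (.Beg (o+s)) → Derivable ℓ (.Beg o)

/-- A layout is deserializable if the length of every varfield is derivable. -/
def Deserializable (ℓ : List Item) : Prop :=
  ∀ j : ℕ, ℓ[j]? = some Item.V → Derivable ℓ (.Len j)

/-!
To get past a varfield `j` the parser needs its length or the beginning of a later position, and
without pointers each of these is only obtained from the other. A pointer can break this circle
only once it has been evaluated itself, so one of the pointers must lie before `j`.
-/

/-- The facts a parser could at most know when it is stuck at the varfield `j`: beginnings up to
that of `j`, values of items before `j`, and every length except that of `j`. This set is the
invariant of derivations in a layout without pointers before `j`. -/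
def ParseFact.AvailableBefore (j : ℕ) : ParseFact → Prop
  | .Beg i => i ≤ j
  | .Len i => i ≠ j
  | .Val i => i < j

theorem getElem?_ne_pointer_of_lt {ℓ : List Item} {i j o s : ℕ}
    (no_pointer : ∀ o s : ℕ, Item.P o s ∉ ℓ.take j) (hij : i < j) :
    ℓ[i]? ≠ some (.P o s) := fun hi =>
  no_pointer o s (List.mem_of_getElem? ((List.getElem?_take_of_lt hij).trans hi))

theorem Derivable.availableBefore {ℓ : List Item} {j : ℕ} (hj : ℓ[j]? = some .V)
    (no_pointer : ∀ o s : ℕ, Item.P o s ∉ ℓ.take j) {f : ParseFact} (hf : Derivable ℓ f) :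
    f.AvailableBefore j := by
  induction hf with
  | begin => exact Nat.zero_le j
  | fieldF i hi | fieldP i o s hi =>
    rintro rfl
    simp [hj] at hi
  | forwardVal i _ _ beg_le len_ne => exact lt_of_le_of_ne beg_le len_ne
  | forwardBeg i _ _ beg_le len_ne => exact Nat.succ_le_of_lt (lt_of_le_of_ne beg_le len_ne)
  | backwardBeg i _ _ beg_succ_le _ => exact Nat.le_of_succ_le beg_succ_le
  | backwardVal i _ _ beg_succ_le _ => exact Nat.lt_of_succ_le beg_succ_le
  | join i _ _ _ beg_succ_le => exact (Nat.lt_of_succ_le beg_succ_le).ne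
  | jumpRight i o s hi _ _ val_lt _ | jumpLeft i o s hi _ _ val_lt _ =>
    exact absurd hi (getElem?_ne_pointer_of_lt no_pointer val_lt)

theorem no_pointer_not_deserializable_general {ℓ : List Item} {j : ℕ} (hj : ℓ[j]? = some .V)
    (no_pointer : ∀ o s : ℕ, Item.P o s ∉ ℓ.take j) : ¬ Deserializable ℓ := fun hd =>
  (hd j hj).availableBefore hj no_pointer rfl

/-- A valid layout containing a varfield but no pointer is not deserializable. -/
theorem no_pointer_not_deserializable (ℓ : List Item) (hval : ValidLayout ℓ)
    (hv : Item.V ∈ ℓ) (hnp : ∀ o s : ℕ, Item.P o s ∉ ℓ) :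
    ¬ Deserializable ℓ := by
  obtain ⟨j, hj⟩ := List.mem_iff_getElem?.mp hv
  exact no_pointer_not_deserializable_general hj fun o s h => hnp o s (List.mem_of_mem_take h)
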